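/- Let 0 < T ≤ ∞, let γ ∈ (0, 1/4), and let u be a smooth function on (0,T) × ℝⁿ solving the heat equation ∂ₜu = Δu. Suppose that for all 0 < a < b < T there exists C(a,b) > 0 such that for every R > 0, (∫ₐᵇ ∫_{B(0,R)} |u(t,x)|² dt dx)^{1/2} ≤ C(a,b)·exp(γR²/(b−a)), and that there exists a sequence (t_k) of times in (0,T) tending to 0 such that u(t_k) → 0 in 𝒮′(ℝⁿ), i.e. ∫_{ℝⁿ} u(t_k,x)φ(x) dx → 0 for every Schwartz function φ. Then u = 0 identically on (0,T) × ℝⁿ. -/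

import Mathlib

open MeasureTheory Metric Filter Set
open scoped Real ENNReal Topology

noncomputable section

abbrev ES (n : ℕ) := EuclideanSpace ℝ (Fin n)

/-- The Laplacian of `f`, as the sum of its second partial derivatives. -/
def heatLap (n : ℕ) (f : ES n → ℝ) (x : ES n) : ℝ :=
  ∑ i : Fin n,
    fderiv ℝ (fun y => fderiv ℝ f y (EuclideanSpace.single i 1)) x (EuclideanSpace.single i 1)

lemma hu_pow_exp (N : ℕ) (d : ℝ) (hd : 0 < d) (s : ℝ) (hs : 0 ≤ s) :
    (1 + s) ^ N ≤ (N.factorial / d ^ N) * Real.exp (d * (1 + s)) := by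
  have h := Real.pow_div_factorial_le_exp (d * (1 + s)) (by positivity) N
  rw [mul_pow, div_le_iff₀ (by positivity)] at h
  rw [div_mul_eq_mul_div, le_div_iff₀ (by positivity)]
  nlinarith [h]

lemma hu_bd1 (N : ℕ) (a : ℝ) (ha : 0 < a) (s : ℝ) (hs : 0 ≤ s) :
    (1 + s) ^ N * Real.exp (-(a * s ^ 2)) ≤ (N.factorial / a ^ N) * Real.exp (2 * a) := by
  calc _ ≤ (N.factorial / a ^ N) * Real.exp (a * (1 + s)) * Real.exp (-(a * s ^ 2)) := by
        gcongr; exact hu_pow_exp N a ha s hs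
    _ = (N.factorial / a ^ N) * Real.exp (a * (1 + s) + -(a * s ^ 2)) := by
        rw [mul_assoc, Real.exp_add]
    _ ≤ _ := by
        gcongr
        nlinarith [mul_nonneg ha.le (sq_nonneg (s - 1)), mul_nonneg ha.le (sq_nonneg s)]

lemma hu_bd2 (n : ℕ) (d : ℝ) (hd : 0 < d) : ∃ M > 0, ∀ q : ℝ, 0 ≤ q →
    q ^ ((n : ℝ) / 2) * (1 + q) ≤ M * Real.exp (d * q) := by
  refine ⟨((n+1).factorial / d ^ (n+1)) * Real.exp d, by positivity, fun q hq => ?_⟩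
  have h1 : q ^ ((n : ℝ) / 2) ≤ (1 + q) ^ n := by
    calc q ^ ((n : ℝ) / 2) ≤ (1 + q) ^ ((n : ℝ) / 2) := by
          apply Real.rpow_le_rpow hq (by linarith) (by positivity)
      _ ≤ (1 + q) ^ (n : ℝ) := by
          apply Real.rpow_le_rpow_of_exponent_le (by linarith)
          have : (0:ℝ) ≤ n := by positivity
          linarith
      _ = _ := Real.rpow_natCast _ _
  calc _ ≤ (1 + q) ^ n * (1 + q) := by gcongr
    _ = (1 + q) ^ (n + 1) := by ring
    _ ≤ _ := hu_pow_exp (n+1) d hd q hq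
    _ = _ := by rw [mul_add, mul_one, Real.exp_add]; ring

lemma hu_schwartz (n : ℕ) (a : ℝ) (ha : 0 < a) (y : ES n) :
    ∃ φ : SchwartzMap (ES n) ℝ, ∀ x, φ x = Real.exp (-(a * ‖x - y‖ ^ 2)) := by
  have hf : (fun x : ES n => a * ‖x - y‖ ^ 2).HasTemperateGrowth := by
    have h1 : (fun x : ES n => ‖x‖ ^ 2).HasTemperateGrowth :=
      Function.hasTemperateGrowth_norm_sq _
    have h2 : (fun x : ES n => x - y).HasTemperateGrowth := by fun_prop
    exact (Function.HasTemperateGrowth.const a).mul (h1.comp h2)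
  have hg : ContDiff ℝ (⊤ : ℕ∞) (fun s : ℝ => Real.exp (-s)) := by fun_prop
  have hgd : ∀ i (s : ℝ), ‖iteratedFDeriv ℝ i (fun s : ℝ => Real.exp (-s)) s‖ = Real.exp (-s) := by
    intro i s
    rw [norm_iteratedFDeriv_eq_norm_iteratedDeriv]
    have := iteratedDeriv_comp_neg i Real.exp s
    rw [this]
    simp [iteratedDeriv_eq_iterate]
  refine ⟨⟨fun x => Real.exp (-(a * ‖x - y‖ ^ 2)), hg.comp hf.1, ?_⟩, fun x => rfl⟩
  intro k m
  obtain ⟨l, C, hC, hb⟩ := hf.norm_iteratedFDeriv_le_uniform m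
  refine ⟨m.factorial * (C + 1) ^ m * (1 + ‖y‖) ^ (k + l * m) *
    (((k + l * m).factorial / a ^ (k + l * m)) * Real.exp (2 * a)), fun x => ?_⟩
  have h1 := norm_iteratedFDeriv_comp_le (n := m) (N := (⊤ : ℕ∞)) (𝕜 := ℝ) hg hf.1
    (by exact_mod_cast le_top) x
    (C := Real.exp (-(a * ‖x - y‖ ^ 2))) (D := (C + 1) * (1 + ‖x‖) ^ l)
    (fun i _ => (hgd i _).le) (by
      intro i h1 hi
      have hD : 1 ≤ (C + 1) * (1 + ‖x‖) ^ l := by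
        have : 1 ≤ (1 + ‖x‖) ^ l := one_le_pow₀ (by linarith [norm_nonneg x])
        nlinarith
      calc _ ≤ C * (1 + ‖x‖) ^ l := hb i hi x
        _ ≤ (C + 1) * (1 + ‖x‖) ^ l := by gcongr; linarith
        _ ≤ _ := le_self_pow₀ hD (by omega))
  have h2 : 1 + ‖x‖ ≤ (1 + ‖y‖) * (1 + ‖x - y‖) := by
    have : ‖x‖ ≤ ‖x - y‖ + ‖y‖ := by simpa using norm_add_le (x - y) y
    nlinarith [norm_nonneg y, norm_nonneg (x - y), mul_nonneg (norm_nonneg y) (norm_nonneg (x-y))]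
  calc ‖x‖ ^ k * ‖iteratedFDeriv ℝ m (fun x => Real.exp (-(a * ‖x - y‖ ^ 2))) x‖
      ≤ (1 + ‖x‖) ^ k * (m.factorial * Real.exp (-(a * ‖x - y‖ ^ 2)) *
          ((C + 1) * (1 + ‖x‖) ^ l) ^ m) := by
        gcongr
        · linarith
        · exact h1
    _ = m.factorial * (C + 1) ^ m * (1 + ‖x‖) ^ (k + l * m) * Real.exp (-(a * ‖x - y‖ ^ 2)) := by
        rw [mul_pow, pow_add, pow_mul]; ring
    _ ≤ m.factorial * (C + 1) ^ m * ((1 + ‖y‖) * (1 + ‖x - y‖)) ^ (k + l * m)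
          * Real.exp (-(a * ‖x - y‖ ^ 2)) := by gcongr
    _ = m.factorial * (C + 1) ^ m * (1 + ‖y‖) ^ (k + l * m) *
        ((1 + ‖x - y‖) ^ (k + l * m) * Real.exp (-(a * ‖x - y‖ ^ 2))) := by rw [mul_pow]; ring
    _ ≤ _ := by
        exact mul_le_mul_of_nonneg_left (hu_bd1 _ a ha _ (norm_nonneg _)) (by positivity)

def hk (n : ℕ) (y : ES n) (σ : ℝ) (x : ES n) : ℝ :=
  σ ^ (-((n : ℝ) / 2)) * Real.exp (-(‖x - y‖ ^ 2 / (4 * σ)))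

lemma hk_nonneg (n : ℕ) (y : ES n) (σ : ℝ) (hσ : 0 < σ) (x : ES n) : 0 ≤ hk n y σ x := by
  unfold hk; positivity

lemma hk_time (n : ℕ) (y : ES n) (σ : ℝ) (hσ : 0 < σ) (x : ES n) :
    HasDerivAt (fun s => hk n y s x)
      ((-((n : ℝ) / (2 * σ)) + ‖x - y‖ ^ 2 / (4 * σ ^ 2)) * hk n y σ x) σ := by
  unfold hk
  have h1 : HasDerivAt (fun s : ℝ => s ^ (-((n : ℝ) / 2)))
      (-((n : ℝ) / 2) * σ ^ (-((n : ℝ) / 2) - 1)) σ :=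
    Real.hasDerivAt_rpow_const (Or.inl hσ.ne')
  have h2 : HasDerivAt (fun s : ℝ => -(‖x - y‖ ^ 2 / (4 * s)))
      (‖x - y‖ ^ 2 / (4 * σ ^ 2)) σ := by
    have h := ((hasDerivAt_inv hσ.ne').const_mul (‖x - y‖ ^ 2 / 4)).fun_neg
    have e : (fun s : ℝ => -(‖x - y‖ ^ 2 / (4 * s))) = fun s : ℝ => -(‖x - y‖ ^ 2 / 4 * s⁻¹) := by
      funext s
      rw [div_mul_eq_div_div]; rfl
    rw [e]
    refine h.congr_deriv ?_
    field_simp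
  refine (h1.fun_mul h2.exp).congr_deriv ?_
  rw [Real.rpow_sub_one hσ.ne']
  field_simp

lemma hk_contDiff (n : ℕ) (y : ES n) (σ : ℝ) : ContDiff ℝ (⊤ : ℕ∞) (hk n y σ) := by
  unfold hk
  refine contDiff_const.mul (Real.contDiff_exp.comp ?_)
  exact (((contDiff_id.sub contDiff_const).norm_sq ℝ).div_const _).neg

lemma hk_cont (n : ℕ) (y : ES n) :
    ContinuousOn (fun p : ℝ × ES n => hk n y p.1 p.2) {p | 0 < p.1} := by
  unfold hk
  refine ContinuousOn.mul ?_ (Real.continuous_exp.comp_continuousOn (ContinuousOn.neg ?_))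
  · exact ContinuousOn.rpow_const continuousOn_fst (fun p hp => Or.inl (ne_of_gt hp))
  · refine ContinuousOn.div (by fun_prop) (by fun_prop) (fun p hp => ?_)
    have : (0:ℝ) < p.1 := hp
    positivity

lemma hk_fderiv (n : ℕ) (y : ES n) (σ : ℝ) (x : ES n) (i : Fin n) :
    fderiv ℝ (hk n y σ) x (EuclideanSpace.single i 1) = -((x i - y i) / (2 * σ)) * hk n y σ x := by
  have h1 : HasFDerivAt (fun x : ES n => ‖x - y‖ ^ 2) (2 • (innerSL ℝ (x - y))) x := by
    have := ((hasFDerivAt_id x).sub_const y).norm_sq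
    simpa using this
  have h2 : HasFDerivAt (hk n y σ) _ x := ((h1.mul_const (4 * σ)⁻¹).neg.exp).const_mul _
  rw [h2.fderiv]
  simp [hk, EuclideanSpace.inner_single_right]
  rcases eq_or_ne σ 0 with h | h
  · simp [h]
  · field_simp
    ring

lemma pd_single (n : ℕ) (y x : ES n) (i : Fin n) (c : ℝ) :
    HasFDerivAt (fun x : ES n => -((x i - y i) * c))
      (-(c • (EuclideanSpace.proj i : ES n →L[ℝ] ℝ))) x := by
  have h := ((EuclideanSpace.proj (𝕜 := ℝ) i : ES n →L[ℝ] ℝ).hasFDerivAt (x := x))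
  exact ((h.sub_const (y i)).mul_const c).neg

lemma hk_lap (n : ℕ) (y : ES n) (σ : ℝ) (hσ : 0 < σ) (x : ES n) :
    heatLap n (hk n y σ) x = (-((n : ℝ) / (2 * σ)) + ‖x - y‖ ^ 2 / (4 * σ ^ 2)) * hk n y σ x := by
  unfold heatLap
  have : ∀ i : Fin n, fderiv ℝ (fun z => fderiv ℝ (hk n y σ) z (EuclideanSpace.single i 1)) x
      (EuclideanSpace.single i 1) = (-(1 / (2 * σ)) + (x i - y i) ^ 2 / (4 * σ ^ 2)) * hk n y σ x := by
    intro i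
    have e : (fun z => fderiv ℝ (hk n y σ) z (EuclideanSpace.single i 1)) =
        fun z : ES n => (-((z i - y i) * (2 * σ)⁻¹)) * hk n y σ z := by
      funext z; rw [hk_fderiv]; rfl
    rw [e]
    have h1 := (pd_single n y x i (2 * σ)⁻¹).fun_mul
      ((hk_contDiff n y σ).differentiable (by simp) x).hasFDerivAt
    rw [h1.fderiv]
    simp [hk_fderiv]
    field_simp
    ring
  rw [Finset.sum_congr rfl (fun i _ => this i), ← Finset.sum_mul, Finset.sum_add_distrib,
    ← Finset.sum_div, EuclideanSpace.norm_sq_eq]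
  simp
  left
  field_simp

lemma cd_fd (n : ℕ) (f : ES n → ℝ) (hf : ContDiff ℝ (⊤ : ℕ∞) f) (v : ES n) :
    ContDiff ℝ (⊤ : ℕ∞) (fun z => fderiv ℝ f z v) :=
  (hf.fderiv_right (m := (⊤ : ℕ∞)) (by simp)).clm_apply contDiff_const

lemma lap_mul (n : ℕ) (f g : ES n → ℝ) (hf : ContDiff ℝ (⊤ : ℕ∞) f) (hg : ContDiff ℝ (⊤ : ℕ∞) g)
    (x : ES n) :
    heatLap n (fun z => f z * g z) x = heatLap n f x * g x +
      2 * (∑ i, fderiv ℝ f x (EuclideanSpace.single i 1) * fderiv ℝ g x (EuclideanSpace.single i 1))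
      + f x * heatLap n g x := by
  unfold heatLap
  rw [Finset.sum_mul, Finset.mul_sum, Finset.mul_sum, ← Finset.sum_add_distrib,
    ← Finset.sum_add_distrib]
  refine Finset.sum_congr rfl fun i _ => ?_
  have hfd := hf.differentiable (by simp)
  have hgd := hg.differentiable (by simp)
  have e : (fun z => fderiv ℝ (fun z => f z * g z) z (EuclideanSpace.single i 1)) =
      fun z => f z * fderiv ℝ g z (EuclideanSpace.single i 1) +
        g z * fderiv ℝ f z (EuclideanSpace.single i 1) := by
    funext z
    rw [((hfd z).hasFDerivAt.fun_mul (hgd z).hasFDerivAt).fderiv]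
    simp
  rw [e]
  have h1 := (cd_fd n f hf (EuclideanSpace.single i 1)).differentiable (by simp) x
  have h2 := (cd_fd n g hg (EuclideanSpace.single i 1)).differentiable (by simp) x
  rw [(((hfd x).hasFDerivAt.fun_mul h2.hasFDerivAt).fun_add ((hgd x).hasFDerivAt.fun_mul h1.hasFDerivAt)).fderiv]
  simp
  ring

lemma cs_fd (n : ℕ) (f : ES n → ℝ) (hf : HasCompactSupport f) (v : ES n) :
    HasCompactSupport (fun z => fderiv ℝ f z v) :=
  hf.fderiv_apply (𝕜 := ℝ) v

lemma lap_ibp (n : ℕ) (v ψ : ES n → ℝ) (hv : ContDiff ℝ (⊤ : ℕ∞) v) (hψ : ContDiff ℝ (⊤ : ℕ∞) ψ)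
    (hs : HasCompactSupport ψ) :
    ∫ x, heatLap n v x * ψ x = ∫ x, v x * heatLap n ψ x := by
  unfold heatLap
  simp_rw [Finset.sum_mul, Finset.mul_sum]
  have key : ∀ f g : ES n → ℝ, ∀ w : ES n, ContDiff ℝ (⊤ : ℕ∞) f → ContDiff ℝ (⊤ : ℕ∞) g →
      HasCompactSupport g → ∫ x, f x * fderiv ℝ g x w = - ∫ x, fderiv ℝ f x w * g x := by
    intro f g w hf hg hc
    apply integral_mul_fderiv_eq_neg_fderiv_mul_of_integrable
    · exact ((cd_fd n f hf w).continuous.mul hg.continuous).integrable_of_hasCompactSupport hc.mul_left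
    · exact (hf.continuous.mul (cd_fd n g hg w).continuous).integrable_of_hasCompactSupport
        (cs_fd n g hc w).mul_left
    · exact (hf.continuous.mul hg.continuous).integrable_of_hasCompactSupport hc.mul_left
    · exact fun x _ => hf.differentiable (by simp) x
    · exact fun x _ => hg.differentiable (by simp) x
  rw [integral_finsetSum, integral_finsetSum]
  · refine Finset.sum_congr rfl fun i _ => ?_
    rw [key v _ _ hv (cd_fd n ψ hψ _) (cs_fd n ψ hs _), key _ ψ _ (cd_fd n v hv _) hψ hs, neg_neg]
  · intro i _
    exact (hv.continuous.mul (cd_fd n _ (cd_fd n ψ hψ _) _).continuous).integrable_of_hasCompactSupport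
        (cs_fd n _ (cs_fd n ψ hs _) _).mul_left
  · intro i _
    exact ((cd_fd n _ (cd_fd n v hv _) _).continuous.mul hψ.continuous).integrable_of_hasCompactSupport
        hs.mul_left

lemma hk_peak (n : ℕ) (y : ES n) (g : ES n → ℝ) (hg : Integrable g) (hc : ContinuousAt g y) :
    Tendsto (fun c : ℝ => ∫ x, g x * hk n y ((c ^ 2)⁻¹) x) atTop
      (𝓝 ((4 * π) ^ ((n : ℝ) / 2) * g y)) := by
  have hm : 0 < (4 * π) ^ ((n : ℝ) / 2) := by positivity
  set m := (4 * π) ^ ((n : ℝ) / 2) with hm_def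
  have hint : ∫ x : ES n, Real.exp (-(1/4) * ‖x‖ ^ 2) = m := by
    rw [GaussianFourier.integral_rexp_neg_mul_sq_norm (by norm_num), hm_def]
    simp
    congr 1
    ring
  have h := tendsto_integral_comp_smul_smul_of_integrable' (μ := (volume : Measure (ES n)))
    (φ := fun x => m⁻¹ * Real.exp (-(1/4) * ‖x‖ ^ 2)) (g := g) (x₀ := y)
    (fun x => by positivity) (by rw [integral_const_mul, hint]; field_simp) ?_ hg hc
  · have h' := h.const_mul m
    refine h'.congr' ?_
    filter_upwards [eventually_gt_atTop 0] with c hc0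
    rw [← integral_const_mul]
    congr 1
    funext x
    have e1 : ((c ^ 2)⁻¹ : ℝ) ^ (-((n : ℝ) / 2)) = c ^ n := by
      rw [Real.inv_rpow (by positivity), Real.rpow_neg (by positivity), inv_inv,
        ← Real.rpow_natCast c 2, ← Real.rpow_mul hc0.le]
      rw [← Real.rpow_natCast c n]
      congr 1
      push_cast
      ring
    have e2 : -(‖x - y‖ ^ 2 / (4 * (c ^ 2)⁻¹)) = -(1/4) * ‖c • (y - x)‖ ^ 2 := by
      rw [norm_smul, norm_sub_rev x y, mul_pow, Real.norm_eq_abs, sq_abs]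
      field_simp
    simp only [hk, e1, e2, finrank_euclideanSpace_fin, smul_eq_mul]
    field_simp
  · have h1 : Tendsto (fun r : ℝ => r ^ n * (m⁻¹ * Real.exp (-(1/4) * r ^ 2))) atTop (𝓝 0) := by
      have h2 := (tendsto_rpow_mul_exp_neg_mul_atTop_nhds_zero ((n:ℝ)) (1/4) (by norm_num)).const_mul m⁻¹
      rw [mul_zero] at h2
      refine squeeze_zero' ?_ ?_ h2
      · filter_upwards [eventually_gt_atTop 0] with r hr
        positivity
      · filter_upwards [eventually_gt_atTop 1] with r hr
        rw [Real.rpow_natCast]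
        have : Real.exp (-(1/4) * r ^ 2) ≤ Real.exp (-(1/4) * r) := by
          apply Real.exp_le_exp.2; nlinarith
        have h0 : 0 ≤ m⁻¹ * r ^ n := by positivity
        nlinarith [mul_le_mul_of_nonneg_left this h0]
    simp only [finrank_euclideanSpace_fin]
    exact h1.comp tendsto_norm_cobounded_atTop

lemma fd_scale (n : ℕ) (f : ES n → ℝ) (hf : Differentiable ℝ f) (c : ℝ) (x v : ES n) :
    fderiv ℝ (fun z => f (c • z)) x v = c * fderiv ℝ f (c • x) v := by
  have h1 : HasFDerivAt (fun z : ES n => c • z) (c • ContinuousLinearMap.id ℝ (ES n)) x :=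
    (hasFDerivAt_id x).const_smul c
  have h2 : HasFDerivAt (fun z => f (c • z)) _ x := (hf (c • x)).hasFDerivAt.comp x h1
  rw [h2.fderiv]
  simp

lemma lap_scale (n : ℕ) (f : ES n → ℝ) (hf : ContDiff ℝ (⊤ : ℕ∞) f) (c : ℝ) (x : ES n) :
    heatLap n (fun z => f (c • z)) x = c ^ 2 * heatLap n f (c • x) := by
  unfold heatLap
  rw [Finset.mul_sum]
  refine Finset.sum_congr rfl fun i _ => ?_
  simp_rw [fd_scale n f (hf.differentiable (by simp)) c]
  have h := (cd_fd n f hf (EuclideanSpace.single i 1))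
  have h2 : Differentiable ℝ (fun x => fderiv ℝ f (c • x) (EuclideanSpace.single i 1)) :=
    (h.comp (contDiff_const_smul c)).differentiable (by simp)
  rw [fderiv_const_mul (h2 x)]
  have := fd_scale n _ (h.differentiable (by simp)) c x (EuclideanSpace.single i 1)
  simp only [smul_apply, this, smul_eq_mul]
  ring

lemma lap_cont (n : ℕ) (f : ES n → ℝ) (hf : ContDiff ℝ (⊤ : ℕ∞) f) : Continuous (heatLap n f) := by
  unfold heatLap
  exact continuous_finsetSum _ fun i _ => (cd_fd n _ (cd_fd n f hf _) _).continuous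

lemma fd_loc (n : ℕ) (f : ES n → ℝ) (x v : ES n) (c : ℝ) (h : f =ᶠ[𝓝 x] fun _ => c) :
    fderiv ℝ f x v = 0 := by
  rw [h.fderiv_eq]; simp

lemma lap_loc (n : ℕ) (f : ES n → ℝ) (x : ES n) (c : ℝ) (h : f =ᶠ[𝓝 x] fun _ => c) :
    heatLap n f x = 0 := by
  unfold heatLap
  refine Finset.sum_eq_zero fun i _ => ?_
  apply fd_loc n _ x _ 0
  filter_upwards [h.eventually_nhds] with z hz
  exact fd_loc n f z _ c hz

lemma hu_cutoff (n : ℕ) (l : ℝ) (hl : 1 < l) : ∃ D > 0, ∀ R ≥ (1:ℝ), ∃ χ : ES n → ℝ,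
    ContDiff ℝ (⊤ : ℕ∞) χ ∧ (∀ x, ‖x‖ ≤ R → χ x = 1) ∧ (∀ x, l * R ≤ ‖x‖ → χ x = 0) ∧
    (∀ x, |χ x| ≤ 1) ∧ (∀ x i, |fderiv ℝ χ x (EuclideanSpace.single i 1)| ≤ D) ∧
    (∀ x, |heatLap n χ x| ≤ D) := by
  let f : ContDiffBump (0 : ES n) := ⟨1, l, one_pos, hl⟩
  have hf : ContDiff ℝ (⊤ : ℕ∞) (f : ES n → ℝ) := f.contDiff
  have hcs : HasCompactSupport (f : ES n → ℝ) := f.hasCompactSupport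
  have hD1 : ∀ i : Fin n, ∃ C, ∀ x, ‖fderiv ℝ f x (EuclideanSpace.single i 1)‖ ≤ C := fun i =>
    (cs_fd n f hcs _).exists_bound_of_continuous (cd_fd n f hf _).continuous
  have hls : HasCompactSupport (heatLap n f) := by
    refine HasCompactSupport.of_support_subset_isCompact (isCompact_closedBall (0 : ES n) l) ?_
    intro x hx
    by_contra hc
    apply hx
    apply lap_loc n f x 0
    have : (closedBall (0 : ES n) l)ᶜ ∈ 𝓝 x := isClosed_closedBall.isOpen_compl.mem_nhds hc
    filter_upwards [this] with z hz
    apply f.zero_of_le_dist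
    simp only [mem_compl_iff, mem_closedBall, not_le] at hz
    exact hz.le
  obtain ⟨D2, hD2⟩ := hls.exists_bound_of_continuous (lap_cont n f hf)
  choose C hC using hD1
  have hC0 : ∀ i, 0 ≤ C i := fun i => (norm_nonneg _).trans (hC i 0)
  have hD20 : 0 ≤ D2 := (norm_nonneg _).trans (hD2 0)
  have hS : ∀ i, C i ≤ ∑ i, C i := fun i => Finset.single_le_sum (fun i _ => hC0 i) (Finset.mem_univ i)
  have hS0 : 0 ≤ ∑ i, C i := Finset.sum_nonneg fun i _ => hC0 i
  refine ⟨∑ i, C i + D2 + 1, by positivity, fun R hR => ?_⟩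
  have hR0 : 0 < R := by linarith
  have hRi : R⁻¹ ≤ 1 := inv_le_one_of_one_le₀ hR
  have hRi0 : 0 ≤ R⁻¹ := by positivity
  refine ⟨fun x => f (R⁻¹ • x), hf.comp (contDiff_const_smul _), ?_, ?_, ?_, ?_, ?_⟩
  · intro x hx
    apply f.one_of_mem_closedBall
    simp only [mem_closedBall, dist_zero_right, norm_smul, norm_inv, Real.norm_of_nonneg hR0.le]
    change R⁻¹ * ‖x‖ ≤ 1
    rw [inv_mul_le_iff₀ hR0]; simpa using hx
  · intro x hx
    apply f.zero_of_le_dist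
    simp only [dist_zero_right, norm_smul, norm_inv, Real.norm_of_nonneg hR0.le]
    change l ≤ R⁻¹ * ‖x‖
    rw [le_inv_mul_iff₀ hR0]; linarith
  · intro x
    rw [abs_of_nonneg f.nonneg]
    exact f.le_one
  · intro x i
    rw [fd_scale n f (hf.differentiable (by simp)), abs_mul, abs_of_nonneg hRi0]
    have := hC i (R⁻¹ • x)
    rw [Real.norm_eq_abs] at this
    have h3 := mul_le_mul hRi this (abs_nonneg _) zero_le_one
    linarith [hS i]
  · intro x
    rw [lap_scale n f hf, abs_mul, abs_of_nonneg (by positivity)]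
    have := hD2 (R⁻¹ • x)
    rw [Real.norm_eq_abs] at this
    have h3 := mul_le_mul (pow_le_one₀ (n := 2) hRi0 hRi) this (abs_nonneg _) zero_le_one
    linarith

def slabT (n : ℕ) (T : ℝ≥0∞) : Set (ℝ × ES n) := {p | 0 < p.1 ∧ ENNReal.ofReal p.1 < T}

lemma slab_open (n : ℕ) (T : ℝ≥0∞) : IsOpen (slabT n T) :=
  (isOpen_lt continuous_const continuous_fst).inter
    (isOpen_lt (ENNReal.continuous_ofReal.comp continuous_fst) continuous_const)

lemma hu_slice (n : ℕ) (T : ℝ≥0∞) (u : ℝ → ES n → ℝ)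
    (hu : ContDiffOn ℝ (⊤ : ℕ∞) (fun p : ℝ × ES n => u p.1 p.2) (slabT n T))
    (t : ℝ) (h0 : 0 < t) (h1 : ENNReal.ofReal t < T) : ContDiff ℝ (⊤ : ℕ∞) (u t) := by
  rw [← contDiffOn_univ]
  exact hu.comp (s := univ) (f := fun x : ES n => (t, x)) (by fun_prop) (fun x _ => ⟨h0, h1⟩)

lemma hu_lapcont (n : ℕ) (T : ℝ≥0∞) (u : ℝ → ES n → ℝ)
    (hu : ContDiffOn ℝ (⊤ : ℕ∞) (fun p : ℝ × ES n => u p.1 p.2) (slabT n T))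
    (hu_heat : ∀ (t : ℝ) (x : ES n), 0 < t → ENNReal.ofReal t < T →
      HasDerivAt (fun τ => u τ x) (heatLap n (u t) x) t) :
    ContinuousOn (fun p : ℝ × ES n => heatLap n (u p.1) p.2) (slabT n T) := by
  have h := hu.continuousOn_fderiv_of_isOpen (slab_open n T) (by simp)
  have h2 : ContinuousOn (fun p : ℝ × ES n => fderiv ℝ (fun p : ℝ × ES n => u p.1 p.2) p (1, 0))
      (slabT n T) := h.clm_apply continuousOn_const
  refine h2.congr fun p hp => ?_
  have h3 := ((hu.differentiableOn (by simp)).differentiableAt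
    ((slab_open n T).mem_nhds hp)).hasFDerivAt
  have h4 : HasDerivAt (fun τ : ℝ => (τ, p.2)) ((1 : ℝ), (0 : ES n)) p.1 :=
    (hasDerivAt_id p.1).prodMk (hasDerivAt_const _ _)
  have h5 : HasDerivAt (fun τ => u τ p.2) _ p.1 := HasFDerivAt.comp_hasDerivAt (f := fun τ : ℝ => (τ, p.2)) p.1 h3 h4
  exact (hu_heat p.1 p.2 hp.1 hp.2).unique h5

lemma hu_int (n : ℕ) (s t L : ℝ) (h : ℝ × ES n → ℝ) (hc : ContinuousOn h (Icc s t ×ˢ univ)) :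
    Integrable h ((volume.restrict (Ioo s t)).prod (volume.restrict (ball (0 : ES n) L))) := by
  rw [Measure.prod_restrict]
  have : IntegrableOn h (Icc s t ×ˢ closedBall (0 : ES n) L)
      ((volume : Measure ℝ).prod (volume : Measure (ES n))) :=
    (hc.mono (prod_mono_right (subset_univ _))).integrableOn_compact
      (isCompact_Icc.prod (isCompact_closedBall _ _))
  exact this.mono_set (prod_mono Ioo_subset_Icc_self ball_subset_closedBall)

def Wk (n : ℕ) (y : ES n) (χ : ES n → ℝ) (σ : ℝ) (x : ES n) : ℝ :=
  hk n y σ x * (heatLap n χ x -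
    ∑ i, (x i - y i) / σ * fderiv ℝ χ x (EuclideanSpace.single i 1))

lemma Wk_eq (n : ℕ) (y : ES n) (χ : ES n → ℝ) (hχ : ContDiff ℝ (⊤ : ℕ∞) χ) (σ : ℝ) (hσ : 0 < σ)
    (x : ES n) :
    heatLap n (fun z => hk n y σ z * χ z) x = heatLap n (hk n y σ) x * χ x + Wk n y χ σ x := by
  rw [lap_mul n _ χ (hk_contDiff n y σ) hχ, Wk]
  simp only [hk_fderiv]
  rw [mul_sub, Finset.mul_sum, Finset.mul_sum]
  have : ∑ i, 2 * (-((x i - y i) / (2 * σ)) * hk n y σ x * fderiv ℝ χ x (EuclideanSpace.single i 1))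
     = - ∑ i, hk n y σ x * ((x i - y i) / σ * fderiv ℝ χ x (EuclideanSpace.single i 1)) := by
    rw [← Finset.sum_neg_distrib]
    refine Finset.sum_congr rfl fun i _ => ?_
    field_simp
  rw [this]
  ring

lemma Wk_cont (n : ℕ) (y : ES n) (χ : ES n → ℝ) (hχ : ContDiff ℝ (⊤ : ℕ∞) χ) :
    ContinuousOn (fun p : ℝ × ES n => Wk n y χ p.1 p.2) {p | 0 < p.1} := by
  unfold Wk
  refine (hk_cont n y).mul (ContinuousOn.sub ?_ ?_)
  · exact ((lap_cont n χ hχ).comp continuous_snd).continuousOn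
  · refine continuousOn_finsetSum _ fun i _ => ContinuousOn.mul (ContinuousOn.div ?_ ?_ ?_) ?_
    · fun_prop
    · fun_prop
    · exact fun p hp => ne_of_gt hp
    · exact ((cd_fd n χ hχ _).continuous.comp continuous_snd).continuousOn

lemma hu_evol (n : ℕ) (T : ℝ≥0∞) (u : ℝ → ES n → ℝ)
    (hu : ContDiffOn ℝ (⊤ : ℕ∞) (fun p : ℝ × ES n => u p.1 p.2) (slabT n T))
    (hu_heat : ∀ (t : ℝ) (x : ES n), 0 < t → ENNReal.ofReal t < T →
      HasDerivAt (fun τ => u τ x) (heatLap n (u t) x) t)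
    (s t ε : ℝ) (hs : 0 < s) (hst : s < t) (ht : ENNReal.ofReal t < T) (hε : 0 < ε)
    (y : ES n) (χ : ES n → ℝ) (hχ : ContDiff ℝ (⊤ : ℕ∞) χ) (L₁ L : ℝ) (hL : L₁ < L)
    (hχ0 : ∀ x, L₁ ≤ ‖x‖ → χ x = 0) :
    (∫ x, u t x * (hk n y ε x * χ x)) - ∫ x, u s x * (hk n y (t - s + ε) x * χ x) =
      ∫ p, u p.1 p.2 * Wk n y χ (t + ε - p.1) p.2
        ∂((volume.restrict (Ioo s t)).prod (volume.restrict (ball (0 : ES n) L))) := by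
  have hslab : ∀ r ∈ Icc s t, 0 < r ∧ ENNReal.ofReal r < T := fun r hr =>
    ⟨hs.trans_le hr.1, (ENNReal.ofReal_le_ofReal hr.2).trans_lt ht⟩
  have hsub : Icc s t ×ˢ (univ : Set (ES n)) ⊆ slabT n T := fun p hp => hslab p.1 hp.1
  have hcs : HasCompactSupport χ := by
    refine HasCompactSupport.intro (isCompact_closedBall (0 : ES n) L) fun x hx => hχ0 x ?_
    simp at hx; linarith
  have hlocal : ∀ x, x ∉ ball (0 : ES n) L → χ =ᶠ[𝓝 x] fun _ => (0:ℝ) := by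
    intro x hx
    have hx' : L ≤ ‖x‖ := by simpa using hx
    have : ∀ᶠ z in 𝓝 x, L₁ < ‖z‖ := continuous_norm.continuousAt.eventually (lt_mem_nhds (by linarith))
    filter_upwards [this] with z hz using hχ0 z hz.le
  have hcomp : ContinuousOn (fun p : ℝ × ES n => (t + ε - p.1, p.2)) (Icc s t ×ˢ univ) := by fun_prop
  have hmaps : MapsTo (fun p : ℝ × ES n => (t + ε - p.1, p.2)) (Icc s t ×ˢ univ) {p | 0 < p.1} := by
    intro p hp
    have := hp.1.2
    simp only [mem_ofPred_eq]
    linarith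
  have hkc : ContinuousOn (fun p : ℝ × ES n => hk n y (t + ε - p.1) p.2) (Icc s t ×ˢ univ) :=
    (hk_cont n y).comp hcomp hmaps
  have hWc : ContinuousOn (fun p : ℝ × ES n => Wk n y χ (t + ε - p.1) p.2) (Icc s t ×ˢ univ) :=
    (Wk_cont n y χ hχ).comp hcomp hmaps
  have huc : ContinuousOn (fun p : ℝ × ES n => u p.1 p.2) (Icc s t ×ˢ univ) :=
    hu.continuousOn.mono hsub
  have hlc := (hu_lapcont n T u hu hu_heat).mono hsub
  -- the time derivative
  let g' : ℝ × ES n → ℝ := fun p => heatLap n (u p.1) p.2 * (hk n y (t + ε - p.1) p.2 * χ p.2) +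
    u p.1 p.2 * (-((-((n : ℝ) / (2 * (t + ε - p.1))) + ‖p.2 - y‖ ^ 2 / (4 * (t + ε - p.1) ^ 2))
      * hk n y (t + ε - p.1) p.2) * χ p.2)
  have hg'c : ContinuousOn g' (Icc s t ×ˢ univ) := by
    have hχc : ContinuousOn (fun p : ℝ × ES n => χ p.2) (Icc s t ×ˢ univ) :=
      (hχ.continuous.comp continuous_snd).continuousOn
    have hne : ∀ p ∈ Icc s t ×ˢ (univ : Set (ES n)), (0:ℝ) < t + ε - p.1 := fun p hp => hmaps hp
    refine (hlc.mul (hkc.mul hχc)).add (huc.mul (((ContinuousOn.mul (ContinuousOn.add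
      (ContinuousOn.neg (ContinuousOn.div ?_ ?_ ?_)) (ContinuousOn.div ?_ ?_ ?_)) hkc).neg).mul hχc))
    · fun_prop
    · fun_prop
    · intro p hp; have := hne p hp; positivity
    · fun_prop
    · fun_prop
    · intro p hp; have := hne p hp; positivity
  have hderiv : ∀ x, ∀ r ∈ Icc s t,
      HasDerivAt (fun r => u r x * (hk n y (t + ε - r) x * χ x)) (g' (r, x)) r := by
    intro x r hr
    have h1 := hu_heat r x (hslab r hr).1 (hslab r hr).2
    have hp : 0 < t + ε - r := by linarith [hr.2]
    have h2 := (hk_time n y (t + ε - r) hp x)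
    have h3 : HasDerivAt (fun r : ℝ => t + ε - r) (-1) r := (hasDerivAt_id r).const_sub _
    have h4 : HasDerivAt (fun r => hk n y (t + ε - r) x) _ r := HasDerivAt.comp r h2 h3
    refine (h1.fun_mul (h4.mul_const (χ x))).congr_deriv ?_
    simp only [g']
    ring
  have hftc : ∀ x, u t x * (hk n y ε x * χ x) - u s x * (hk n y (t - s + ε) x * χ x) =
      ∫ r in Ioo s t, g' (r, x) := by
    intro x
    have hc : ContinuousOn (fun r => g' (r, x)) (uIcc s t) := by
      rw [uIcc_of_le hst.le]
      exact hg'c.comp (by fun_prop) (fun r hr => ⟨hr, mem_univ _⟩)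
    have h := intervalIntegral.integral_eq_sub_of_hasDerivAt
      (f := fun r => u r x * (hk n y (t + ε - r) x * χ x)) (f' := fun r => g' (r, x))
      (a := s) (b := t) (by rw [uIcc_of_le hst.le]; exact hderiv x) hc.intervalIntegrable
    rw [intervalIntegral.integral_of_le hst.le, integral_Ioc_eq_integral_Ioo] at h
    rw [h]
    simp only [add_sub_cancel_left]
    congr 4
    ring
  have hslice : ∀ r ∈ Icc s t, ∀ σ, Integrable (fun x => u r x * (hk n y σ x * χ x)) := by
    intro r hr σ
    have := (hu_slice n T u hu r (hslab r hr).1 (hslab r hr).2).continuous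
    exact (this.mul ((hk_contDiff n y σ).continuous.mul hχ.continuous)).integrable_of_hasCompactSupport
      hcs.mul_left.mul_left
  rw [← integral_sub (hslice t ⟨hst.le, le_rfl⟩ _) (hslice s ⟨le_rfl, hst.le⟩ _)]
  simp_rw [hftc]
  have hball : ∀ r, ∀ x, x ∉ ball (0 : ES n) L → g' (r, x) = 0 := by
    intro r x hx
    have : χ x = 0 := (hlocal x hx).self_of_nhds
    simp [g', this]
  rw [← setIntegral_eq_integral_of_forall_compl_eq_zero (s := ball (0 : ES n) L)
    (fun x hx => by simp [hball _ x hx])]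
  rw [integral_integral_swap (f := fun x r => g' (r, x)) (hu_int n s t L g' hg'c).swap]
  rw [integral_prod (fun p : ℝ × ES n => u p.1 p.2 * Wk n y χ (t + ε - p.1) p.2) (hu_int n s t L _ (huc.mul hWc))]
  refine setIntegral_congr_fun measurableSet_Ioo fun r hr => ?_
  have hr' := Ioo_subset_Icc_self hr
  have hp : 0 < t + ε - r := by linarith [hr.2]
  simp only
  rw [setIntegral_eq_integral_of_forall_compl_eq_zero (fun x hx => hball r x hx)]
  rw [setIntegral_eq_integral_of_forall_compl_eq_zero (fun x hx => by
    have h1 : heatLap n χ x = 0 := lap_loc n χ x 0 (hlocal x hx)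
    simp [Wk, h1, fd_loc n χ x _ 0 (hlocal x hx)])]
  have hur := hu_slice n T u hu r (hslab r hr').1 (hslab r hr').2
  have hψ : ContDiff ℝ (⊤ : ℕ∞) (fun z => hk n y (t + ε - r) z * χ z) := (hk_contDiff n y _).mul hχ
  have hibp := lap_ibp n (u r) (fun z => hk n y (t + ε - r) z * χ z) hur hψ hcs.mul_left
  have hkl := lap_cont n _ (hk_contDiff n y (t + ε - r))
  have i1 : Integrable (fun x => heatLap n (u r) x * (hk n y (t + ε - r) x * χ x)) :=
    ((lap_cont n _ hur).mul hψ.continuous).integrable_of_hasCompactSupport hcs.mul_left.mul_left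
  have i2 : Integrable (fun x => u r x * (-(heatLap n (hk n y (t + ε - r)) x) * χ x)) :=
    (hur.continuous.mul (hkl.neg.mul hχ.continuous)).integrable_of_hasCompactSupport
      hcs.mul_left.mul_left
  have i3 : Integrable (fun x => u r x * heatLap n (fun z => hk n y (t + ε - r) z * χ z) x) := by
    have e : (fun x => u r x * heatLap n (fun z => hk n y (t + ε - r) z * χ z) x) =
      fun x => ∑ i, u r x * fderiv ℝ (fun z' => fderiv ℝ (fun z => hk n y (t + ε - r) z * χ z) z'
          (EuclideanSpace.single i 1)) x (EuclideanSpace.single i 1) := by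
      funext x; simp only [heatLap, Finset.mul_sum]
    rw [e]
    refine integrable_finsetSum _ fun i _ => ?_
    exact (hur.continuous.mul (cd_fd n _ (cd_fd n _ hψ _) _).continuous).integrable_of_hasCompactSupport
        (cs_fd n _ (cs_fd n _ hcs.mul_left _) _).mul_left
  simp only [g', ← hk_lap n y _ hp]
  rw [integral_add i1 i2, hibp, ← integral_add i3 i2]
  congr 1
  funext x
  rw [Wk_eq n y χ hχ _ hp]
  ring

lemma Wk_bd (n : ℕ) (κ D : ℝ) (hκ0 : 0 < κ) (hκ : κ < 1/4) (hD : 0 < D) : ∃ M > 0, ∀ (y : ES n) (R : ℝ)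
    (χ : ES n → ℝ), ‖y‖ + 1 ≤ R → (∀ x, ‖x‖ ≤ R → χ x = 1) →
    (∀ x i, |fderiv ℝ χ x (EuclideanSpace.single i 1)| ≤ D) →
    (∀ x, |heatLap n χ x| ≤ D) → ∀ σ₁ σ : ℝ, 0 < σ → σ ≤ σ₁ → ∀ x,
      |Wk n y χ σ x| ≤ M * Real.exp (-(κ * (R - ‖y‖) ^ 2 / σ₁)) := by
  obtain ⟨M, hM, hMb⟩ := hu_bd2 n (1/4 - κ) (by linarith)
  refine ⟨(n + 1) * D * M, by positivity, ?_⟩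
  intro y R χ hR h1 hd hl σ₁ σ hσ hσ1 x
  rcases lt_or_ge ‖x‖ R with hx | hx
  · have hloc : χ =ᶠ[𝓝 x] fun _ => (1:ℝ) := by
      have : ∀ᶠ z in 𝓝 x, ‖z‖ < R := continuous_norm.continuousAt.eventually (gt_mem_nhds hx)
      filter_upwards [this] with z hz using h1 z hz.le
    have e1 : heatLap n χ x = 0 := lap_loc n χ x 1 hloc
    have : Wk n y χ σ x = 0 := by simp [Wk, e1, fd_loc n χ x _ 1 hloc]
    rw [this, abs_zero]
    positivity
  · have hz : R - ‖y‖ ≤ ‖x - y‖ := by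
      have := norm_sub_norm_le x y
      linarith
    have hz1 : 1 ≤ ‖x - y‖ := by linarith
    have hz2 : ‖x - y‖ ≤ ‖x - y‖ ^ 2 := by nlinarith
    have hz3 : 1 ≤ ‖x - y‖ ^ 2 := by nlinarith
    set q := ‖x - y‖ ^ 2 / σ with hq
    have hq0 : 0 ≤ q := by positivity
    have hk_le : hk n y σ x ≤ q ^ ((n : ℝ) / 2) * Real.exp (-(q / 4)) := by
      unfold hk
      have e : ‖x - y‖ ^ 2 / (4 * σ) = q / 4 := by rw [hq]; field_simp
      rw [e, Real.rpow_neg hσ.le, ← Real.inv_rpow hσ.le]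
      gcongr
      rw [hq, inv_eq_one_div]
      gcongr
    have hbr : |heatLap n χ x - ∑ i, (x i - y i) / σ * fderiv ℝ χ x (EuclideanSpace.single i 1)|
        ≤ (n + 1) * D * (1 + q) := by
      have hs : |∑ i, (x i - y i) / σ * fderiv ℝ χ x (EuclideanSpace.single i 1)| ≤ n * (q * D) := by
        calc _ ≤ ∑ i : Fin n, |(x i - y i) / σ * fderiv ℝ χ x (EuclideanSpace.single i 1)| :=
              Finset.abs_sum_le_sum_abs _ _
          _ ≤ ∑ i : Fin n, q * D := by
              refine Finset.sum_le_sum fun i _ => ?_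
              rw [abs_mul, abs_div, abs_of_pos hσ]
              have h2 : |x i - y i| ≤ ‖x - y‖ := by
                have := PiLp.norm_apply_le (x - y) i
                simpa using this
              have h3 : |x i - y i| / σ ≤ q := by
                rw [hq]; gcongr; linarith
              exact mul_le_mul h3 (hd x i) (abs_nonneg _) hq0
          _ = _ := by simp
      calc _ ≤ |heatLap n χ x| + |∑ i, (x i - y i) / σ * fderiv ℝ χ x (EuclideanSpace.single i 1)| :=
            abs_sub _ _
        _ ≤ D + n * (q * D) := add_le_add (hl x) hs
        _ ≤ _ := by
            have : 0 ≤ (n:ℝ) * D := by positivity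
            have : 0 ≤ D * q := by positivity
            nlinarith
    rw [Wk, abs_mul, abs_of_nonneg (hk_nonneg n y σ hσ x)]
    calc _ ≤ (q ^ ((n : ℝ) / 2) * Real.exp (-(q / 4))) * ((n + 1) * D * (1 + q)) := by gcongr
      _ = (n + 1) * D * (q ^ ((n : ℝ) / 2) * (1 + q)) * Real.exp (-(q/4)) := by ring
      _ ≤ (n + 1) * D * (M * Real.exp ((1/4 - κ) * q)) * Real.exp (-(q/4)) := by
          have := hMb q hq0
          have h0 : 0 ≤ ((n:ℝ) + 1) * D := by positivity
          exact mul_le_mul_of_nonneg_right (mul_le_mul_of_nonneg_left this h0) (Real.exp_pos _).le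
      _ = (n + 1) * D * M * Real.exp (-(κ * q)) := by
          have : Real.exp (-(κ * q)) = Real.exp ((1/4 - κ) * q) * Real.exp (-(q/4)) := by
            rw [← Real.exp_add]; congr 1; ring
          rw [this]; ring
      _ ≤ _ := by
          gcongr
          rw [hq, mul_div_assoc]
          have hh : 0 ≤ R - ‖y‖ := by linarith [norm_nonneg y]
          gcongr

lemma hu_err (n : ℕ) (T : ℝ≥0∞) (γ : ℝ) (u : ℝ → ES n → ℝ)
    (hu : ContDiffOn ℝ (⊤ : ℕ∞) (fun p : ℝ × ES n => u p.1 p.2) (slabT n T))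
    (s t L C B : ℝ) (hs : 0 < s) (hst : s < t) (ht : ENNReal.ofReal t < T) (hC : 0 < C) (hL : 0 < L)
    (hB : 0 ≤ B)
    (hI : Real.sqrt (∫ r in Set.Ioo s t, ∫ x in Metric.ball (0 : ES n) L, (u r x) ^ 2) ≤
        C * Real.exp (γ * L ^ 2 / (t - s)))
    (W : ℝ × ES n → ℝ) (hW : ∀ p : ℝ × ES n, p.1 ∈ Ioo s t → |W p| ≤ B) :
    |∫ p, u p.1 p.2 * W p
        ∂((volume.restrict (Ioo s t)).prod (volume.restrict (ball (0 : ES n) L)))| ≤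
      B / 2 * Real.exp (γ * L ^ 2 / (t - s)) *
        ((t - s) * (L ^ n * volume.real (ball (0 : ES n) 1)) + C ^ 2) := by
  set μ := ((volume.restrict (Ioo s t)).prod (volume.restrict (ball (0 : ES n) L))) with hμ
  set E := Real.exp (γ * L ^ 2 / (t - s)) with hE
  have hE0 : 0 < E := Real.exp_pos _
  have hsub : Icc s t ×ˢ (univ : Set (ES n)) ⊆ slabT n T := fun p hp =>
    ⟨hs.trans_le hp.1.1, (ENNReal.ofReal_le_ofReal hp.1.2).trans_lt ht⟩
  have huc : ContinuousOn (fun p : ℝ × ES n => u p.1 p.2) (Icc s t ×ˢ univ) :=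
    hu.continuousOn.mono hsub
  have hi2 : Integrable (fun p : ℝ × ES n => (u p.1 p.2) ^ 2) μ := hu_int n s t L _ (huc.pow 2)
  have hi1 : Integrable (fun _ : ℝ × ES n => (1:ℝ)) μ := hu_int n s t L _ continuousOn_const
  have hsq : ∫ p, (u p.1 p.2) ^ 2 ∂μ ≤ C ^ 2 * E ^ 2 := by
    rw [integral_prod _ hi2, ← mul_pow]
    exact (Real.sqrt_le_iff.1 hI).2
  have hone : ∫ _p, (1:ℝ) ∂μ = (t - s) * (L ^ n * volume.real (ball (0 : ES n) 1)) := by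
    rw [integral_prod _ hi1]
    simp only [integral_const, smul_eq_mul, mul_one, measureReal_restrict_apply_univ]
    have hb : volume.real (ball (0 : ES n) L) = L ^ n * volume.real (ball (0 : ES n) 1) := by
      rw [measureReal_def, Measure.addHaar_ball_of_pos _ _ hL, ENNReal.toReal_mul,
        ENNReal.toReal_ofReal (by positivity), ← measureReal_def, finrank_euclideanSpace_fin]
    rw [hb]
    simp [hst.le]
  have hae : ∀ᵐ p ∂μ, |u p.1 p.2 * W p| ≤ B / 2 * (E * 1 + E⁻¹ * (u p.1 p.2) ^ 2) := by
    have : ∀ᵐ p ∂μ, p ∈ Ioo s t ×ˢ ball (0 : ES n) L := by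
      rw [hμ, Measure.prod_restrict]
      exact ae_restrict_mem (measurableSet_Ioo.prod measurableSet_ball)
    filter_upwards [this] with p hp
    rw [abs_mul]
    have h1 := hW p hp.1
    have h2 : |u p.1 p.2| ≤ (E * 1 + E⁻¹ * (u p.1 p.2) ^ 2) / 2 := by
      rw [← sq_abs (u p.1 p.2), inv_mul_eq_div]
      have : E * 1 + |u p.1 p.2| ^ 2 / E - 2 * |u p.1 p.2| = (E - |u p.1 p.2|) ^ 2 / E := by
        field_simp; ring
      have h3 : 0 ≤ (E - |u p.1 p.2|) ^ 2 / E := by positivity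
      linarith
    have := mul_le_mul h2 h1 (abs_nonneg _) ((abs_nonneg _).trans h2)
    linarith
  calc _ ≤ ∫ p, |u p.1 p.2 * W p| ∂μ := abs_integral_le_integral_abs
    _ ≤ ∫ p, B / 2 * (E * 1 + E⁻¹ * (u p.1 p.2) ^ 2) ∂μ :=
        integral_mono_of_nonneg (Eventually.of_forall fun p => abs_nonneg _)
          (((hi1.const_mul E).add (hi2.const_mul E⁻¹)).const_mul _) hae
    _ = B / 2 * (E * ((t - s) * (L ^ n * volume.real (ball (0 : ES n) 1))) +
          E⁻¹ * ∫ p, (u p.1 p.2) ^ 2 ∂μ) := by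
        rw [integral_const_mul, integral_add (hi1.const_mul E) (hi2.const_mul E⁻¹),
          integral_const_mul, integral_const_mul, hone]
    _ ≤ B / 2 * (E * ((t - s) * (L ^ n * volume.real (ball (0 : ES n) 1))) +
          E⁻¹ * (C ^ 2 * E ^ 2)) := by gcongr
    _ = _ := by field_simp

lemma hu_lim (n : ℕ) (a κ Y τ A v C l : ℝ) (hτ : 0 < τ) (hab : a < κ) :
    Tendsto (fun N : ℕ => A * Real.exp (-(κ * ((N:ℝ) - Y) ^ 2 / τ)) / 2 *
      Real.exp (a * (N:ℝ) ^ 2 / τ) * (τ * ((l * N) ^ n * v) + C ^ 2)) atTop (𝓝 0) := by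
  set K := ((2 * κ * Y + τ) ^ 2 / (4 * (κ - a)) - κ * Y ^ 2) / τ with hK
  have hd : 0 < κ - a := by linarith
  have key : ∀ N : ℝ, -(κ * (N - Y) ^ 2 / τ) + a * N ^ 2 / τ ≤ K - N := by
    intro N
    rw [hK, ← sub_nonneg]
    have : ((2 * κ * Y + τ) ^ 2 / (4 * (κ - a)) - κ * Y ^ 2) / τ - N -
        (-(κ * (N - Y) ^ 2 / τ) + a * N ^ 2 / τ) =
        (2 * (κ - a) * N - (2 * κ * Y + τ)) ^ 2 / (4 * (κ - a)) / τ := by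
      field_simp
      ring
    rw [this]
    positivity
  have h1 : Tendsto (fun N : ℕ => |A| / 2 * Real.exp K * (|τ * l ^ n * v| * ((N:ℝ) ^ n * Real.exp (-N)) +
      C ^ 2 * Real.exp (-N))) atTop (𝓝 0) := by
    have e1 := (Real.tendsto_pow_mul_exp_neg_atTop_nhds_zero n).comp (tendsto_natCast_atTop_atTop (R := ℝ))
    have e2 := (Real.tendsto_pow_mul_exp_neg_atTop_nhds_zero 0).comp (tendsto_natCast_atTop_atTop (R := ℝ))
    have := ((e1.const_mul |τ * l ^ n * v|).add (e2.const_mul (C ^ 2))).const_mul (|A| / 2 * Real.exp K)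
    simpa [Function.comp_def] using this
  refine squeeze_zero_norm (fun N => ?_) h1
  rw [Real.norm_eq_abs, abs_mul, abs_mul, abs_div, abs_mul, Real.abs_exp, Real.abs_exp, abs_two]
  have hb : |τ * ((l * N) ^ n * v) + C ^ 2| ≤ |τ * l ^ n * v| * (N:ℝ) ^ n + C ^ 2 := by
    refine (abs_add_le _ _).trans ?_
    rw [abs_of_nonneg (sq_nonneg C)]
    gcongr
    have : τ * ((l * (N:ℝ)) ^ n * v) = (τ * l ^ n * v) * (N:ℝ) ^ n := by rw [mul_pow]; ring
    rw [this, abs_mul, abs_of_nonneg (a := (N:ℝ) ^ n) (by positivity)]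
  calc _ = |A| / 2 * Real.exp (-(κ * ((N:ℝ) - Y) ^ 2 / τ) + a * (N:ℝ) ^ 2 / τ) *
        |τ * ((l * N) ^ n * v) + C ^ 2| := by rw [Real.exp_add]; ring
    _ ≤ |A| / 2 * Real.exp (K - N) * (|τ * l ^ n * v| * (N:ℝ) ^ n + C ^ 2) := by
        gcongr; exact key N
    _ = _ := by rw [sub_eq_add_neg, Real.exp_add]; ring

lemma hu_cutlim (n : ℕ) (y : ES n) (g : ES n → ℝ) (hg : Integrable g) (τ : ℝ) (hτ : 0 < τ) :
    Tendsto (fun c : ℝ => ∫ x, g x * hk n y (τ + (c ^ 2)⁻¹) x) atTop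
      (𝓝 (∫ x, g x * hk n y τ x)) := by
  have hinv : Tendsto (fun c : ℝ => τ + (c ^ 2)⁻¹) atTop (𝓝 τ) := by
    have := (tendsto_inv_atTop_zero.comp (tendsto_pow_atTop (α := ℝ) (n := 2) (by norm_num))).const_add τ
    simpa using this
  refine tendsto_integral_filter_of_dominated_convergence
    (fun x => |g x| * τ ^ (-((n : ℝ) / 2))) ?_ ?_ ?_ ?_
  · exact Eventually.of_forall fun c => hg.aestronglyMeasurable.mul
      (hk_contDiff n y _).continuous.aestronglyMeasurable
  · refine Eventually.of_forall fun c => Eventually.of_forall fun x => ?_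
    have hp : 0 ≤ (c ^ 2)⁻¹ := by positivity
    have hp2 : 0 < τ + (c ^ 2)⁻¹ := by positivity
    rw [norm_mul, Real.norm_eq_abs, Real.norm_of_nonneg (hk_nonneg n y _ hp2 x)]
    gcongr
    unfold hk
    have h1 : (τ + (c ^ 2)⁻¹) ^ (-((n : ℝ) / 2)) ≤ τ ^ (-((n : ℝ) / 2)) := by
      apply Real.rpow_le_rpow_of_nonpos hτ (by linarith)
      have : (0:ℝ) ≤ n := by positivity
      linarith
    have h2 : Real.exp (-(‖x - y‖ ^ 2 / (4 * (τ + (c ^ 2)⁻¹)))) ≤ 1 := by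
      rw [Real.exp_le_one_iff, neg_nonpos]; positivity
    calc _ ≤ τ ^ (-((n : ℝ) / 2)) * 1 := mul_le_mul h1 h2 (Real.exp_pos _).le (by positivity)
      _ = _ := mul_one _
  · exact hg.abs.mul_const _
  · refine Eventually.of_forall fun x => ?_
    exact (((hk_time n y τ hτ x).continuousAt.tendsto).comp hinv).const_mul _

lemma hu_rep (n : ℕ) (T : ℝ≥0∞) (γ : ℝ) (hγ : γ ∈ Set.Ioo (0 : ℝ) (1/4)) (u : ℝ → ES n → ℝ)
    (hu : ContDiffOn ℝ (⊤ : ℕ∞) (fun p : ℝ × ES n => u p.1 p.2) (slabT n T))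
    (hu_heat : ∀ (t : ℝ) (x : ES n), 0 < t → ENNReal.ofReal t < T →
      HasDerivAt (fun τ => u τ x) (heatLap n (u t) x) t)
    (hsize : ∀ a b : ℝ, 0 < a → a < b → ENNReal.ofReal b < T → ∃ C > 0, ∀ R > 0,
      Real.sqrt (∫ t in Set.Ioo a b, ∫ x in Metric.ball (0 : ES n) R, (u t x) ^ 2) ≤
        C * Real.exp (γ * R ^ 2 / (b - a)))
    (s t : ℝ) (hs : 0 < s) (hst : s < t) (ht : ENNReal.ofReal t < T) (y : ES n)
    (hint : Integrable (fun x => u s x * hk n y (t - s) x)) :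
    (4 * π) ^ ((n : ℝ) / 2) * u t y = ∫ x, u s x * hk n y (t - s) x := by
  obtain ⟨hγ0, hγ1⟩ := hγ
  obtain ⟨C, hC, hCb⟩ := hsize s t hs hst ht
  set κ := (γ + 1/4) / 2 with hκ
  have hκ0 : 0 < κ := by linarith
  have hκ1 : κ < 1/4 := by linarith
  have hτ : 0 < t - s := by linarith
  obtain ⟨l', hl', hl'2⟩ : ∃ l' : ℝ, 1 < l' ∧ γ * l' ^ 2 < κ := by
    refine ⟨√(((γ + κ) / 2) / γ), ?_, ?_⟩
    · rw [Real.lt_sqrt (by norm_num), lt_div_iff₀ hγ0]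
      linarith
    · rw [Real.sq_sqrt (by positivity)]
      field_simp
      linarith
  obtain ⟨D, hD, hcut⟩ := hu_cutoff n ((1 + l') / 2) (by linarith)
  obtain ⟨M, hM, hMb⟩ := Wk_bd n κ D hκ0 hκ1 hD
  have hus := (hu_slice n T u hu s hs ((ENNReal.ofReal_le_ofReal hst.le).trans_lt ht)).continuous
  have hut := (hu_slice n T u hu t (hs.trans hst) ht).continuous
  choose! χ hχ hχ1 hχ0 hχa hχd hχl using hcut
  have hinv : Tendsto (fun c : ℝ => (c ^ 2)⁻¹) atTop (𝓝 0) :=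
    tendsto_inv_atTop_zero.comp (tendsto_pow_atTop (α := ℝ) (n := 2) (by norm_num))
  set m := (4 * π) ^ ((n : ℝ) / 2)
  set v := volume.real (ball (0 : ES n) 1)
  have main : ∀ R : ℝ, ‖y‖ + 1 ≤ R →
      |m * u t y - ∫ x, (u s x * χ R x) * hk n y (t - s) x| ≤
      M * Real.exp (-(κ * (R - ‖y‖) ^ 2 / (t - s))) / 2 *
        Real.exp ((γ * l' ^ 2) * R ^ 2 / (t - s)) * ((t - s) * ((l' * R) ^ n * v) + C ^ 2) := by
    intro R hR
    have hR1 : 1 ≤ R := by linarith [norm_nonneg y]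
    have hR0 : 0 < R := by linarith
    have hcs : HasCompactSupport (χ R) := by
      refine HasCompactSupport.intro (isCompact_closedBall (0 : ES n) ((1 + l') / 2 * R))
        fun x hx => hχ0 R hR1 x ?_
      simp at hx; linarith
    have it : Integrable (fun x => u t x * χ R x) :=
      (hut.mul (hχ R hR1).continuous).integrable_of_hasCompactSupport hcs.mul_left
    have is' : Integrable (fun x => u s x * χ R x) :=
      (hus.mul (hχ R hR1).continuous).integrable_of_hasCompactSupport hcs.mul_left
    have l1 := hk_peak n y (fun x => u t x * χ R x) it (hut.mul (hχ R hR1).continuous).continuousAt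
    have l2 := hu_cutlim n y (fun x => u s x * χ R x) is' (t - s) hτ
    have l3 := (l1.sub l2).abs
    have e1 : χ R y = 1 := hχ1 R hR1 y (by linarith)
    simp only [e1, mul_one] at l3
    have l4 : Tendsto (fun c : ℝ => M * Real.exp (-(κ * (R - ‖y‖) ^ 2 / (t - s + (c ^ 2)⁻¹))) / 2 *
        Real.exp ((γ * l' ^ 2) * R ^ 2 / (t - s)) * ((t - s) * ((l' * R) ^ n * v) + C ^ 2)) atTop
        (𝓝 (M * Real.exp (-(κ * (R - ‖y‖) ^ 2 / (t - s))) / 2 *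
        Real.exp ((γ * l' ^ 2) * R ^ 2 / (t - s)) * ((t - s) * ((l' * R) ^ n * v) + C ^ 2))) := by
      refine Tendsto.mul_const _ (Tendsto.mul_const _ (Tendsto.div_const (Tendsto.const_mul _
        ((Real.continuous_exp.tendsto _).comp (Tendsto.neg (Tendsto.div tendsto_const_nhds ?_ hτ.ne')))) _))
      simpa using hinv.const_add (t - s)
    refine le_of_tendsto_of_tendsto l3 l4 ?_
    filter_upwards [eventually_gt_atTop 0] with c hc
    have hε : 0 < (c ^ 2)⁻¹ := by positivity
    have hL : (1 + l') / 2 * R < l' * R := by nlinarith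
    have hL0 : 0 < l' * R := by positivity
    have hev := hu_evol n T u hu hu_heat s t (c ^ 2)⁻¹ hs hst ht hε y (χ R) (hχ R hR1)
      ((1 + l') / 2 * R) (l' * R) hL (hχ0 R hR1)
    have herr := hu_err n T γ u hu s t (l' * R) C
      (M * Real.exp (-(κ * (R - ‖y‖) ^ 2 / (t - s + (c ^ 2)⁻¹)))) hs hst ht hC hL0 (by positivity)
      (hCb _ hL0) (fun p => Wk n y (χ R) (t + (c ^ 2)⁻¹ - p.1) p.2) (by
        intro p hp
        exact hMb y R (χ R) hR (hχ1 R hR1) (hχd R hR1) (hχl R hR1) _ _ (by linarith [hp.2])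
          (by linarith [hp.1]) p.2)
    rw [← hev] at herr
    have e2 : γ * (l' * R) ^ 2 = γ * l' ^ 2 * R ^ 2 := by ring
    rw [e2] at herr
    convert! herr using 5
    · ring
    · ring
  have lim1 := hu_lim n (γ * l' ^ 2) κ ‖y‖ (t - s) M v C l' hτ hl'2
  have lim2 : Tendsto (fun N : ℕ => ∫ x, (u s x * χ N x) * hk n y (t - s) x) atTop
      (𝓝 (∫ x, u s x * hk n y (t - s) x)) := by
    refine tendsto_integral_filter_of_dominated_convergence
      (fun x => |u s x * hk n y (t - s) x|) ?_ ?_ hint.abs ?_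
    · filter_upwards [eventually_ge_atTop 1] with N hN
      exact ((hus.mul (hχ N (by exact_mod_cast hN)).continuous).mul
        (hk_contDiff n y _).continuous).aestronglyMeasurable
    · filter_upwards [eventually_ge_atTop 1] with N hN
      refine Eventually.of_forall fun x => ?_
      have := hχa N (by exact_mod_cast hN) x
      rw [Real.norm_eq_abs, mul_right_comm, abs_mul]
      exact mul_le_of_le_one_right (abs_nonneg _) this
    · refine Eventually.of_forall fun x => ?_
      refine tendsto_const_nhds.congr' ?_
      filter_upwards [eventually_ge_atTop 1, eventually_ge_atTop ⌈‖x‖⌉₊] with N hN hN2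
      rw [hχ1 N (by exact_mod_cast hN) x ((Nat.le_ceil _).trans (by exact_mod_cast hN2)), mul_one]
  have lim3 := (lim2.const_sub (m * u t y)).abs
  have hle : |m * u t y - ∫ x, u s x * hk n y (t - s) x| ≤ 0 := by
    refine le_of_tendsto_of_tendsto lim3 lim1 ?_
    filter_upwards [eventually_ge_atTop ⌈‖y‖ + 1⌉₊] with N hN
    exact main N ((Nat.le_ceil _).trans (by exact_mod_cast hN))
  exact sub_eq_zero.1 (abs_nonpos_iff.1 hle)

/-- **Uniqueness for the heat equation.**
If `u` is a smooth solution of the heat equation on `(0,T) × ℝⁿ` satisfying the local `L²`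
size condition with Gaussian-type growth `γ < 1/4`, and there is a sequence `tₖ → 0` with
`u(tₖ) → 0` in `𝒮'(ℝⁿ)` (i.e. `∫ u(tₖ)φ → 0` for every Schwartz `φ`), then `u = 0`. -/
theorem heat_uniqueness
    (n : ℕ) (T : ℝ≥0∞) (hT : 0 < T) (γ : ℝ) (hγ : γ ∈ Set.Ioo (0 : ℝ) (1/4))
    (u : ℝ → ES n → ℝ)
    (hu_smooth : ContDiffOn ℝ (⊤ : ℕ∞) (fun p : ℝ × ES n => u p.1 p.2)
      {p : ℝ × ES n | 0 < p.1 ∧ ENNReal.ofReal p.1 < T})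
    (hu_heat : ∀ (t : ℝ) (x : ES n), 0 < t → ENNReal.ofReal t < T →
      HasDerivAt (fun τ => u τ x) (heatLap n (u t) x) t)
    -- Size condition
    (hsize : ∀ a b : ℝ, 0 < a → a < b → ENNReal.ofReal b < T → ∃ C > 0, ∀ R > 0,
      Real.sqrt (∫ t in Set.Ioo a b, ∫ x in Metric.ball (0 : ES n) R, (u t x) ^ 2) ≤
        C * Real.exp (γ * R ^ 2 / (b - a)))
    -- u(tₖ) → 0 in 𝒮'(ℝⁿ)
    (hinit : ∃ tk : ℕ → ℝ, (∀ k, 0 < tk k ∧ ENNReal.ofReal (tk k) < T) ∧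
      Tendsto tk atTop (nhds 0) ∧
      ∀ φ : SchwartzMap (ES n) ℝ,
        (∀ k, Integrable (fun x => u (tk k) x * φ x)) ∧
        Tendsto (fun k => ∫ x, u (tk k) x * φ x) atTop (nhds 0)) :
    ∀ (t : ℝ) (x : ES n), 0 < t → ENNReal.ofReal t < T → u t x = 0 := by
  obtain ⟨tk, htk, htk0, hφ⟩ := hinit
  intro τ y hτ hτT
  have hu : ContDiffOn ℝ (⊤ : ℕ∞) (fun p : ℝ × ES n => u p.1 p.2) (slabT n T) := hu_smooth
  obtain ⟨φ, hφe⟩ := hu_schwartz n (4 * τ)⁻¹ (by positivity) y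
  obtain ⟨hint, hlim⟩ := hφ φ
  have hke : ∀ x, hk n y τ x = τ ^ (-((n : ℝ) / 2)) * φ x := by
    intro x
    rw [hφe, hk, inv_mul_eq_div]
  have htend : Tendsto (fun k => tk k + τ) atTop (𝓝 τ) := by
    simpa using htk0.add_const τ
  have hopen : IsOpen {r : ℝ | ENNReal.ofReal r < T} :=
    isOpen_lt ENNReal.continuous_ofReal continuous_const
  have hev : ∀ᶠ k in atTop, ENNReal.ofReal (tk k + τ) < T :=
    htend.eventually (hopen.mem_nhds hτT)
  have l1 : Tendsto (fun k => (4 * π) ^ ((n : ℝ) / 2) * u (tk k + τ) y) atTop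
      (𝓝 ((4 * π) ^ ((n : ℝ) / 2) * u τ y)) :=
    ((hu_heat τ y hτ hτT).continuousAt.tendsto.comp htend).const_mul _
  have l2 : Tendsto (fun k => (4 * π) ^ ((n : ℝ) / 2) * u (tk k + τ) y) atTop (𝓝 0) := by
    have := hlim.const_mul (τ ^ (-((n : ℝ) / 2)))
    rw [mul_zero] at this
    refine this.congr' ?_
    filter_upwards [hev] with k hk'
    have e : (fun x => u (tk k) x * hk n y τ x) =
        fun x => τ ^ (-((n : ℝ) / 2)) * (u (tk k) x * φ x) := by
      funext x; rw [hke]; ring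
    have hi : Integrable (fun x => u (tk k) x * hk n y τ x) := by
      rw [e]; exact (hint k).const_mul _
    have h := hu_rep n T γ hγ u hu hu_heat hsize (tk k) (tk k + τ) (htk k).1 (by linarith) hk' y
      (by rw [add_sub_cancel_left]; exact hi)
    rw [h, add_sub_cancel_left, e, integral_const_mul]
  have h0 := tendsto_nhds_unique l1 l2
  have hm : (0:ℝ) < (4 * π) ^ ((n : ℝ) / 2) := by positivity
  rcases mul_eq_zero.1 h0 with h | h
  · exact absurd h hm.ne'
  · exact h

end
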